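/- Let V ⊆ ℂ be a Jordan domain, i.e., a bounded connected open set whose frontier ∂V is homeomorphic to the unit circle. Let f and g be holomorphic functions on an open neighborhood of the closure of V. Suppose that g(closure V) ⊆ f(V) and that g(∂V) ∩ f(∂V) = ∅. Then there exists λ ∈ V such that f(λ) = g(λ). -/

import Mathlib

open Metric

/-!
Fix `p ∈ ∂V` with `g p ∈ f(V)`. Since `f(z) - g(w)` never vanishes on the connected compact space
`∂V × ∂V`, a Künneth-type argument shows that on the diagonal `(f - g) * (f p - g p)` agrees with
`(f - g p) * (f p - g)` up to the exponential of a continuous function. If `f - g` had no zero in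
`V`, the boundary values of the holomorphic function `(f - g p) * (f p - g)` would thus extend
continuously to `V` without zeros. Its degree along `∂V` would then vanish, yet this degree counts
the zeros of the function in `V`, and there is one because `g p ∈ f(V)`. The degree is read off at
infinity, after dividing out the finitely many zeros so that a polynomial remains on `∂V`.
-/

open Asymptotics Bornology Filter Polynomial Set Topology

section ContinuousLog

lemma eq_of_exp_comp_constant {X : Type*} [TopologicalSpace X] [PreconnectedSpace X] {k : X → ℂ}
    (hk : Continuous k) (h : ∀ a b, Complex.exp (k a) = Complex.exp (k b)) (a b : X) : k a = k b :=
  Complex.isCoveringMap_exp.const_of_comp hk (fun a b ↦ Subtype.ext (h a b)) a b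

variable {X Y : Type*} [TopologicalSpace X] [TopologicalSpace Y] [CompactSpace Y] {F : X × Y → ℂ}

lemma eventually_forall_div_mem_slitPlane (hF : Continuous F) (hF0 : ∀ p, F p ≠ 0) (x : X) :
    ∀ᶠ x' in 𝓝 x, ∀ y, F (x', y) / F (x, y) ∈ Complex.slitPlane := by
  have hcont : Continuous fun q : X × Y ↦ F q / F (x, q.2) :=
    hF.div (by fun_prop) fun q ↦ hF0 (x, q.2)
  have hnear : ∀ y, ∀ᶠ q in 𝓝 (x, y), F q / F (x, q.2) ∈ Complex.slitPlane := fun y ↦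
    hcont.continuousAt.eventually_mem
      (Complex.isOpen_slitPlane.mem_nhds (by simp [div_self (hF0 (x, y))]))
  simpa using isCompact_univ.eventually_forall_of_forall_eventually fun y _ ↦ hnear y

lemma exists_eq_mul_exp_of_preconnectedSpace [PreconnectedSpace X] (hF : Continuous F)
    (hF0 : ∀ p, F p ≠ 0) (x₀ x : X) :
    ∃ L : C(Y, ℂ), ∀ y, F (x, y) = F (x₀, y) * Complex.exp (L y) := by
  let SameClass : X → X → Prop := fun x x' ↦
    ∃ L : C(Y, ℂ), ∀ y, F (x', y) = F (x, y) * Complex.exp (L y)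
  have : Std.Symm SameClass := ⟨fun x x' ⟨L, hL⟩ ↦
    ⟨-L, fun y ↦ by simp [hL, mul_assoc, ← Complex.exp_add]⟩⟩
  have : IsTrans X SameClass := ⟨fun x x' x'' ⟨L, hL⟩ ⟨L', hL'⟩ ↦
    ⟨L + L', fun y ↦ by simp [hL, hL', mul_assoc, Complex.exp_add]⟩⟩
  refine PreconnectedSpace.induction₂ SameClass (fun x ↦ ?_) this x₀ x
  filter_upwards [eventually_forall_div_mem_slitPlane hF hF0 x] with x' hx'
  have hquot : Continuous fun y ↦ F (x', y) / F (x, y) :=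
    Continuous.div (by fun_prop) (by fun_prop) fun y ↦ hF0 (x, y)
  refine ⟨⟨fun y ↦ Complex.log (F (x', y) / F (x, y)), hquot.clog hx'⟩, fun y ↦ ?_⟩
  simp [Complex.exp_log (Complex.slitPlane_ne_zero (hx' y)), mul_div_cancel₀ _ (hF0 (x, y))]

lemma eventually_forall_log_sub_log_eq [PreconnectedSpace Y] (hF : Continuous F)
    (hF0 : ∀ p, F p ≠ 0) {x₀ : X} {L : X → C(Y, ℂ)}
    (hL : ∀ x y, F (x, y) = F (x₀, y) * Complex.exp (L x y)) (x₁ : X) (y₀ : Y) :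
    ∀ᶠ x in 𝓝 x₁, ∀ y,
      Complex.log (F (x, y) / F (x₁, y)) - Complex.log (F (x, y₀) / F (x₁, y₀))
        = (L x y - L x y₀) - (L x₁ y - L x₁ y₀) := by
  filter_upwards [eventually_forall_div_mem_slitPlane hF hF0 x₁] with x hx y
  have hlog : Continuous fun y ↦ Complex.log (F (x, y) / F (x₁, y)) :=
    (Continuous.div (by fun_prop) (by fun_prop) fun y ↦ hF0 (x₁, y)).clog hx
  have hexp : ∀ y, Complex.exp (L x y - L x₁ y - Complex.log (F (x, y) / F (x₁, y))) = 1 := by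
    intro y
    have := hF0 (x₀, y)
    rw [Complex.exp_sub, Complex.exp_sub, Complex.exp_log (Complex.slitPlane_ne_zero (hx y)),
      hL x y, hL x₁ y]
    field_simp
  have hconst := eq_of_exp_comp_constant (by fun_prop)
    (fun a b ↦ (hexp a).trans (hexp b).symm) y y₀
  linear_combination -hconst

/- The logarithms `L x` are chosen separately for each `x`; subtracting the value at `y₀` removes
the `2πi ℤ`-ambiguity in these choices. -/
lemma continuous_uncurry_sub_of_eq_mul_exp [PreconnectedSpace Y] (hF : Continuous F)
    (hF0 : ∀ p, F p ≠ 0) {x₀ : X} {L : X → C(Y, ℂ)}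
    (hL : ∀ x y, F (x, y) = F (x₀, y) * Complex.exp (L x y)) (y₀ : Y) :
    Continuous fun q : X × Y ↦ L q.1 q.2 - L q.1 y₀ := by
  refine continuous_iff_continuousAt.mpr fun ⟨x₁, y₁⟩ ↦ ?_
  have hlog : ∀ g : X × Y → Y, Continuous g →
      ContinuousAt (fun q ↦ Complex.log (F (q.1, g q) / F (x₁, g q))) (x₁, y₁) := by
    intro g hg
    refine ContinuousAt.clog (ContinuousAt.div (by fun_prop) (by fun_prop) (hF0 _)) ?_
    simp [div_self (hF0 _)]
  have hnear : ContinuousAt (fun q : X × Y ↦ Complex.log (F (q.1, q.2) / F (x₁, q.2))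
      - Complex.log (F (q.1, y₀) / F (x₁, y₀)) + (L x₁ q.2 - L x₁ y₀)) (x₁, y₁) :=
    ((hlog _ continuous_snd).sub (hlog _ continuous_const)).add (by fun_prop)
  refine hnear.congr ?_
  filter_upwards [continuousAt_fst.eventually (eventually_forall_log_sub_log_eq hF hF0 hL x₁ y₀)]
    with q hq
  rw [hq q.2, sub_add_cancel]

lemma exists_mul_eq_mul_mul_exp [PreconnectedSpace X] [PreconnectedSpace Y] (hF : Continuous F)
    (hF0 : ∀ p, F p ≠ 0) (x₀ : X) (y₀ : Y) :
    ∃ M : C(X × Y, ℂ), ∀ x y,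
      F (x, y) * F (x₀, y₀) = F (x, y₀) * F (x₀, y) * Complex.exp (M (x, y)) := by
  choose L hL using exists_eq_mul_exp_of_preconnectedSpace hF hF0 x₀
  refine ⟨⟨_, continuous_uncurry_sub_of_eq_mul_exp hF hF0 hL y₀⟩, fun x y ↦ ?_⟩
  simp only [ContinuousMap.coe_mk, hL x, Complex.exp_sub]
  field_simp

end ContinuousLog

section PolynomialDegree

lemma eq_zero_of_exp_eq_circle_pow {n : ℕ} (L : C(Circle, ℂ))
    (hL : ∀ z, Complex.exp (L z) = z ^ n) : n = 0 := by
  have hexp : ∀ t : ℝ, Complex.exp (L (Circle.exp t) - n * (t * Complex.I)) = 1 := by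
    intro t
    rw [Complex.exp_sub, hL, Complex.exp_nat_mul, Circle.coe_exp, div_self (by simp)]
  have hconst := eq_of_exp_comp_constant (by fun_prop)
    (fun s t ↦ (hexp s).trans (hexp t).symm) 0 (2 * Real.pi)
  have hperiod : (n : ℂ) * (2 * Real.pi * Complex.I) = 0 := by
    simp only [Circle.exp_zero, Circle.exp_two_pi] at hconst
    push_cast at hconst
    linear_combination hconst
  exact_mod_cast (mul_eq_zero.mp hperiod).resolve_right Complex.two_pi_I_ne_zero

lemma eq_zero_of_isEquivalent_const_mul_pow {F : ℂ → ℂ} {n : ℕ} {c : ℂ} (hF : Continuous F)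
    (hF0 : ∀ z, F z ≠ 0) (hc : c ≠ 0) (hFc : F ~[cobounded ℂ] (c * · ^ n)) : n = 0 := by
  have hpow : ∀ᶠ z in cobounded ℂ, c * z ^ n ≠ 0 := by
    filter_upwards [eventually_ne_cobounded 0] with z hz using mul_ne_zero hc (pow_ne_zero n hz)
  have hslit : ∀ᶠ z in cobounded ℂ, F z / (c * z ^ n) ∈ Complex.slitPlane :=
    ((isEquivalent_iff_tendsto_one hpow).mp hFc).eventually_mem
      (Complex.isOpen_slitPlane.mem_nhds Complex.one_mem_slitPlane)
  obtain ⟨r, -, hr⟩ := hasBasis_cobounded_norm.eventually_iff.mp hslit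
  obtain ⟨R, hrR, hR⟩ : ∃ R : ℝ, r ≤ R ∧ 0 < R := ⟨max r 1, le_max_left _ _, by positivity⟩
  have hR' : (R : ℂ) ≠ 0 := by exact_mod_cast hR.ne'
  have hS : ∀ z : Circle, F (R * z) / (c * (R * z) ^ n) ∈ Complex.slitPlane := fun z ↦
    hr (by simpa [abs_of_pos hR, Circle.norm_coe] using hrR)
  obtain ⟨L, hL⟩ := exists_eq_mul_exp_of_preconnectedSpace (X := ℝ) (Y := Circle)
    (F := fun q ↦ F (q.1 * q.2)) (by fun_prop) (fun q ↦ hF0 _) 0 R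
  have hlog : Continuous fun z : Circle ↦ Complex.log (F (R * z) / (c * (R * z) ^ n)) :=
    (Continuous.div (by fun_prop) (by fun_prop) fun z ↦ by simp [hc, hR']).clog hS
  refine eq_zero_of_exp_eq_circle_pow
    ⟨fun z ↦ L z - Complex.log (F (R * z) / (c * (R * z) ^ n)) + Complex.log (F 0 / (c * R ^ n)),
      by fun_prop⟩ fun z ↦ ?_
  have hLz : F (R * z) = F 0 * Complex.exp (L z) := by simpa using hL z
  have h0 := hF0 0
  have hz : (z : ℂ) ≠ 0 := z.coe_ne_zero
  rw [ContinuousMap.coe_mk, Complex.exp_add, Complex.exp_sub,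
    Complex.exp_log (Complex.slitPlane_ne_zero (hS z)), Complex.exp_log (by positivity), hLz,
    mul_pow]
  field_simp

lemma natDegree_eq_zero_of_eqOn_frontier {S : Set ℂ} (hS : IsBounded S) {P : ℂ[X]}
    (hP : ∀ z ∉ closure S, P.eval z ≠ 0) {w : ℂ → ℂ} (hw : ContinuousOn w (closure S))
    (hw0 : ∀ z ∈ closure S, w z ≠ 0) (hwP : ∀ z ∈ frontier S, w z = P.eval z) :
    P.natDegree = 0 := by
  classical
  let F : ℂ → ℂ := (closure S).piecewise w P.eval
  have hF : Continuous F :=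
    continuous_piecewise (fun z hz ↦ hwP z (frontier_closure_subset hz)) (by rwa [closure_closure])
      P.continuous.continuousOn
  have hF0 : ∀ z, F z ≠ 0 := by
    intro z
    by_cases hz : z ∈ closure S
    · simpa [F, hz] using hw0 z hz
    · simpa [F, hz] using hP z hz
  have hFP : F =ᶠ[cobounded ℂ] P.eval := by
    filter_upwards [isBounded_def.mp hS.closure] with z hz
    exact piecewise_eq_of_notMem _ _ _ hz
  have hP0 : P ≠ 0 := by
    rintro rfl
    obtain ⟨z, hz⟩ := hFP.exists
    exact hF0 z (by simpa using hz)
  have hlead : P.leadingCoeff ≠ 0 := leadingCoeff_ne_zero.mpr hP0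
  exact eq_zero_of_isEquivalent_const_mul_pow hF hF0 hlead
    (hFP.isEquivalent.trans isEquivalent_cobounded_leading_monomial)

end PolynomialDegree

section Zeros

lemma exists_eq_sub_pow_mul {𝕜 : Type*} [NontriviallyNormedField 𝕜] {f : 𝕜 → 𝕜} {U : Set 𝕜} {a : 𝕜}
    (hf : AnalyticOnNhd 𝕜 f U) (ha : a ∈ U) (hfa : ¬ ∀ᶠ z in 𝓝 a, f z = 0) :
    ∃ (n : ℕ) (h : 𝕜 → 𝕜), AnalyticOnNhd 𝕜 h U ∧ h a ≠ 0 ∧ ∀ z, f z = (z - a) ^ n * h z := by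
  classical
  obtain ⟨n, q, hq, hqa, hfq⟩ := (hf a ha).exists_eventuallyEq_pow_smul_nonzero_iff.mpr hfa
  let h : 𝕜 → 𝕜 := Function.update (fun z ↦ f z / (z - a) ^ n) a (q a)
  have hne : ∀ z ≠ a, h z = f z / (z - a) ^ n := fun z hz ↦ Function.update_of_ne hz _ _
  have hha : h a = q a := Function.update_self _ _ _
  have hpow : ∀ z ≠ a, (z - a) ^ n ≠ 0 := fun z hz ↦ pow_ne_zero _ (sub_ne_zero.mpr hz)
  have hhq : q =ᶠ[𝓝 a] h := by
    filter_upwards [hfq] with z hz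
    rcases eq_or_ne z a with rfl | hza
    · exact hha.symm
    · rw [hne z hza, hz, smul_eq_mul, mul_div_cancel_left₀ _ (hpow z hza)]
  refine ⟨n, h, fun z hz ↦ ?_, hha ▸ hqa, fun z ↦ ?_⟩
  · rcases eq_or_ne z a with rfl | hza
    · exact hq.congr hhq
    · refine ((hf z hz).div (g := fun w ↦ (w - a) ^ n) (by fun_prop) (hpow z hza)).congr ?_
      filter_upwards [isOpen_ne.mem_nhds hza] with w hw using (hne w hw).symm
  · rcases eq_or_ne z a with rfl | hza
    · rw [hha, hfq.self_of_nhds, smul_eq_mul]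
    · rw [hne z hza, mul_div_cancel₀ _ (hpow z hza)]

lemma exists_monic_eval_mul_of_finite_zeros {𝕜 : Type*} [NontriviallyNormedField 𝕜] {f : 𝕜 → 𝕜}
    {U : Set 𝕜} (hU : IsOpen U) (hf : AnalyticOnNhd 𝕜 f U) (hfin : {z ∈ U | f z = 0}.Finite) :
    ∃ (P : 𝕜[X]) (h : 𝕜 → 𝕜), P.Monic ∧ (∀ a, P.eval a = 0 → a ∈ U) ∧ AnalyticOnNhd 𝕜 h U ∧
      (∀ z ∈ U, h z ≠ 0) ∧ ∀ z, f z = P.eval z * h z := by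
  classical
  obtain ⟨Z, hZ⟩ : ∃ Z : Finset 𝕜, ∀ z, z ∈ Z ↔ z ∈ U ∧ f z = 0 := ⟨hfin.toFinset, by simp⟩
  induction Z using Finset.induction_on generalizing f with
  | empty => exact ⟨1, f, monic_one, by simp, hf, by simpa using hZ, by simp⟩
  | insert a Z haZ ih =>
    have ha : a ∈ U ∧ f a = 0 := (hZ a).mp (Z.mem_insert_self a)
    have hfa : ¬ ∀ᶠ z in 𝓝 a, f z = 0 := fun h0 ↦
      infinite_of_mem_nhds a (inter_mem (hU.mem_nhds ha.1) h0) hfin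
    obtain ⟨n, k, hk, hka, hfk⟩ := exists_eq_sub_pow_mul hf ha.1 hfa
    have hkZ : ∀ z, z ∈ Z ↔ z ∈ U ∧ k z = 0 := by
      intro z
      rcases eq_or_ne z a with rfl | hza
      · simp [haZ, hka]
      · have hpow : (z - a) ^ n ≠ 0 := pow_ne_zero _ (sub_ne_zero.mpr hza)
        simpa [hza, hfk z, hpow] using hZ z
    have hkfin : {z ∈ U | k z = 0}.Finite := Z.finite_toSet.subset fun z hz ↦ (hkZ z).mpr hz
    obtain ⟨P, h, hP, hPU, hh, hh0, hkP⟩ := ih hk hkfin hkZ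
    refine ⟨(X - C a) ^ n * P, h, ((monic_X_sub_C a).pow n).mul hP, fun z hz ↦ ?_, hh, hh0,
      fun z ↦ ?_⟩
    · simp only [eval_mul, eval_pow, eval_sub, eval_X, eval_C, mul_eq_zero] at hz
      rcases hz with hz | hz
      · rw [sub_eq_zero.mp (eq_zero_of_pow_eq_zero hz)]
        exact ha.1
      · exact hPU z hz
    · simp [hfk z, hkP z, mul_assoc]

variable {V : Set ℂ} {f : ℂ → ℂ}

lemma finite_zeros_of_ne_zero_on_frontier (hV : IsOpen V) (hVb : IsBounded V)
    (hf : DiffContOnCl ℂ f V) (hf0 : ∀ z ∈ frontier V, f z ≠ 0) : {z ∈ V | f z = 0}.Finite := by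
  set Z : Set ℂ := {z ∈ V | f z = 0}
  have hZ : IsClosed Z := by
    convert hf.continuousOn.preimage_isClosed_of_isClosed isClosed_closure isClosed_singleton
      (t := {0}) using 1
    ext z
    refine ⟨fun hz ↦ ⟨subset_closure hz.1, hz.2⟩, fun hz ↦ ⟨?_, hz.2⟩⟩
    by_contra hzV
    exact hf0 z ⟨hz.1, by rwa [hV.interior_eq]⟩ hz.2
  have hZb : IsBounded Z := hVb.subset (sep_subset _ _)
  have hderiv : derivedSet Z ⊆ Z := (isClosed_iff_derivedSet_subset Z).mp hZ
  -- By the identity theorem `f` vanishes near any accumulation point of `Z`.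
  have hopen : IsOpen (derivedSet Z) := by
    refine isOpen_iff_mem_nhds.mpr fun a ha ↦ ?_
    have haV : a ∈ V := (hderiv ha).1
    have hfreq : ∃ᶠ z in 𝓝[≠] a, f z = 0 :=
      (accPt_iff_frequently_nhdsNE.mp ha).mono fun z hz ↦ hz.2
    have hev : ∀ᶠ z in 𝓝 a, f z = 0 :=
      (hf.differentiableOn.analyticAt (hV.mem_nhds haV)).frequently_zero_iff_eventually_zero.mp
        hfreq
    filter_upwards [(hev.and (hV.mem_nhds haV)).eventually_nhds] with z hz
    refine accPt_iff_frequently_nhdsNE.mpr (Eventually.frequently ?_)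
    filter_upwards [hz.filter_mono nhdsWithin_le_nhds] with w hw using ⟨hw.2, hw.1⟩
  have hempty : derivedSet Z = ∅ := by
    refine (isClopen_iff.mp ⟨isClosed_derivedSet Z, hopen⟩).resolve_right fun huniv ↦ ?_
    exact NormedSpace.unbounded_univ ℝ ℂ (hZb.subset (huniv ▸ hderiv))
  by_contra hinf
  obtain ⟨a, -, ha⟩ := Set.Infinite.exists_accPt_of_subset_isCompact hinf
    (isCompact_of_isClosed_isBounded hZ hZb) subset_rfl
  simpa [hempty] using mem_derivedSet.mpr ha

lemma ne_zero_of_frontier_eq_mul_exp (hV : IsOpen V) (hVb : IsBounded V) {u : ℂ → ℂ}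
    (hf : DiffContOnCl ℂ f V) (hu : ContinuousOn u (closure V)) (hu0 : ∀ z ∈ closure V, u z ≠ 0)
    (L : C(frontier V, ℂ)) (huf : ∀ z : frontier V, u z = f z * Complex.exp (L z)) :
    ∀ z ∈ V, f z ≠ 0 := by
  have hf0 : ∀ z ∈ frontier V, f z ≠ 0 := fun z hz hfz ↦
    hu0 z (frontier_subset_closure hz) (by simp [huf ⟨z, hz⟩, hfz])
  obtain ⟨P, h, hP, hPV, hh, hh0, hfP⟩ := exists_monic_eval_mul_of_finite_zeros hV
    (hf.differentiableOn.analyticOnNhd hV) (finite_zeros_of_ne_zero_on_frontier hV hVb hf hf0)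
  have hhcl0 : ∀ z ∈ closure V, h z ≠ 0 := by
    intro z hz
    by_cases hzV : z ∈ V
    · exact hh0 z hzV
    · exact right_ne_zero_of_mul (hfP z ▸ hf0 z ⟨hz, by rwa [hV.interior_eq]⟩)
  have hhcl : ContinuousOn h (closure V) := by
    intro z hz
    by_cases hzV : z ∈ V
    · exact (hh z hzV).continuousAt.continuousWithinAt
    · have hPz : P.eval z ≠ 0 := fun h0 ↦ hzV (hPV z h0)
      refine ((hf.continuousOn z hz).div P.continuousWithinAt hPz).congr_of_eventuallyEq ?_ ?_
      · filter_upwards [mem_nhdsWithin_of_mem_nhds (P.continuous.continuousAt.eventually_ne hPz)]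
          with w hw
        rw [Pi.div_apply, hfP w, mul_div_cancel_left₀ _ hw]
      · rw [Pi.div_apply, hfP z, mul_div_cancel_left₀ _ hPz]
  obtain ⟨M, hM⟩ := L.exists_restrict_eq isClosed_frontier
  have hdeg : P.natDegree = 0 := by
    refine natDegree_eq_zero_of_eqOn_frontier hVb
      (fun z hz h0 ↦ hz (subset_closure (hPV z h0)))
      (w := fun z ↦ u z / (Complex.exp (M z) * h z))
      (hu.div (by fun_prop) fun z hz ↦ ?_) (fun z hz ↦ ?_) fun z hz ↦ ?_
    · exact mul_ne_zero (Complex.exp_ne_zero _) (hhcl0 z hz)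
    · exact div_ne_zero (hu0 z hz) (mul_ne_zero (Complex.exp_ne_zero _) (hhcl0 z hz))
    · have hMz : M z = L ⟨z, hz⟩ := DFunLike.congr_fun hM ⟨z, hz⟩
      have := hhcl0 z (frontier_subset_closure hz)
      simp only [huf ⟨z, hz⟩, hfP z, hMz]
      field_simp
  intro z hz
  rw [hfP z, hP.natDegree_eq_zero.mp hdeg, eval_one, one_mul]
  exact hh0 z hz

end Zeros

theorem coincidence_on_jordan_domain_general {V : Set ℂ} (hV : IsOpen V) (hVb : IsBounded V)
    (hconn : IsPreconnected (frontier V)) {f g : ℂ → ℂ} (hf : DiffContOnCl ℂ f V)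
    (hg : DiffContOnCl ℂ g V) (hmeet : (g '' frontier V ∩ f '' V).Nonempty)
    (hdisj : Disjoint (g '' frontier V) (f '' frontier V)) :
    ∃ l ∈ V, f l = g l := by
  by_contra! hne
  obtain ⟨_, ⟨p, hp, rfl⟩, a, haV, hfa⟩ := hmeet
  have hsub : ∀ z ∈ frontier V, ∀ w ∈ frontier V, f z - g w ≠ 0 := fun z hz w hw h ↦
    hdisj.ne_of_mem ⟨w, hw, rfl⟩ ⟨z, hz, rfl⟩ (sub_eq_zero.mp h).symm
  have hfg : ∀ z ∈ closure V, f z - g z ≠ 0 := by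
    intro z hz
    by_cases hzV : z ∈ V
    · exact sub_ne_zero.mpr (hne z hzV)
    · have hzf : z ∈ frontier V := ⟨hz, by rwa [hV.interior_eq]⟩
      exact hsub z hzf z hzf
  have : PreconnectedSpace (frontier V) := Subtype.preconnectedSpace hconn
  have : CompactSpace (frontier V) := isCompact_iff_compactSpace.mp
    (hVb.isCompact_closure.of_isClosed_subset isClosed_frontier frontier_subset_closure)
  have hfc : Continuous ((frontier V).domRestrict f) :=
    (hf.continuousOn.mono frontier_subset_closure).domRestrict
  have hgc : Continuous ((frontier V).domRestrict g) :=
    (hg.continuousOn.mono frontier_subset_closure).domRestrict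
  obtain ⟨M, hM⟩ := exists_mul_eq_mul_mul_exp
    ((hfc.comp continuous_fst).sub (hgc.comp continuous_snd))
    (fun q ↦ hsub _ q.1.2 _ q.2.2) ⟨p, hp⟩ ⟨p, hp⟩
  refine ne_zero_of_frontier_eq_mul_exp hV hVb (f := fun z ↦ (f z - g p) * (f p - g z))
    (u := fun z ↦ (f z - g z) * (f p - g p)) ?_ ?_ ?_
    (M.comp ⟨fun z ↦ (z, z), by fun_prop⟩) (fun z ↦ hM z z) a haV (by simp [hfa])
  · exact (hf.sub_const (g p)).smul (hg.const_sub (f p))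
  · exact (hf.continuousOn.sub hg.continuousOn).mul continuousOn_const
  · exact fun z hz ↦ mul_ne_zero (hfg z hz) (hsub p hp p hp)

/-- **A fixed-point/coincidence lemma on Jordan domains.**
Let `V ⊆ ℂ` be a Jordan domain (a bounded connected open set whose frontier is
homeomorphic to the unit circle). Let `f, g` be holomorphic on an open
neighborhood `O` of the closure of `V`. If `g(closure V) ⊆ f(V)` and
`g(∂V) ∩ f(∂V) = ∅`, then there exists `λ ∈ V` with `f(λ) = g(λ)`. -/
theorem coincidence_on_jordan_domain
    (V : Set ℂ) (hVopen : IsOpen V) (hVconn : IsConnected V)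
    (hVbdd : Bornology.IsBounded V)
    (hjordan : Nonempty (frontier V ≃ₜ (sphere (0 : ℂ) 1 : Set ℂ)))
    (f g : ℂ → ℂ) (O : Set ℂ) (hO : IsOpen O) (hclO : closure V ⊆ O)
    (hf : DifferentiableOn ℂ f O) (hg : DifferentiableOn ℂ g O)
    (hsub : g '' closure V ⊆ f '' V)
    (hdisj : (g '' frontier V) ∩ (f '' frontier V) = ∅) :
    ∃ l ∈ V, f l = g l := by
  obtain ⟨φ⟩ := hjordan
  have hsphere : IsConnected (sphere (0 : ℂ) 1) :=
    isConnected_sphere (by simp [Complex.rank_real_complex]) 0 zero_le_one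
  have : ConnectedSpace (sphere (0 : ℂ) 1) := Subtype.connectedSpace hsphere
  have hconn : IsConnected (frontier V) :=
    isConnected_iff_connectedSpace.mpr (φ.symm.surjective.connectedSpace φ.symm.continuous)
  obtain ⟨p, hp⟩ := hconn.nonempty
  exact coincidence_on_jordan_domain_general hVopen hVbdd hconn.isPreconnected
    (hf.mono hclO).diffContOnCl (hg.mono hclO).diffContOnCl
    ⟨g p, ⟨p, hp, rfl⟩, hsub ⟨p, frontier_subset_closure hp, rfl⟩⟩
    (disjoint_iff_inter_eq_empty.mpr hdisj)
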